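/- For every integer k ≥ 6, there is no perfect square m such that (m, 2^k) is an interlocking pair. Equivalently, if (m, 2^k) is an interlocking pair with k ≥ 6, then τ(m) is even. -/

import Mathlib

/-!
Passing from consecutive to arbitrary divisors, an interlocking pair `(m, 2 ^ k)` has a power of two
strictly between any two divisors of `m` exceeding `1`, so distinct such divisors have distinct
binary logarithms, rounded down. On the other hand, once `3 ≤ k`, `m` has a divisor in each of
`(2, 4)` and `(4, 8)`. Hence `3 ∣ m`; then `m` is odd, because `2` and `3` have the same logarithm,
and so `5 ∣ m` or `7 ∣ m`. If `m` is a square then `9 ∣ m`. In the first case `9` and `15` divide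
`m` and both lie in `[8, 16)`; in the second case `49` and `63` divide `m` and both lie in
`[32, 64)`.
-/

/-- `(m, n)` is an interlocking pair: both are positive, and between any two
consecutive divisors (the smaller one exceeding 1) of either number there is a
divisor of the other. -/
def Interlocking (m n : ℕ) : Prop :=
  0 < m ∧ 0 < n ∧
  (∀ d d' : ℕ, d ∣ n → d' ∣ n → 1 < d → d < d' →
    (∀ e : ℕ, e ∣ n → ¬(d < e ∧ e < d')) →
    ∃ e : ℕ, e ∣ m ∧ d < e ∧ e < d') ∧
  (∀ d d' : ℕ, d ∣ m → d' ∣ m → 1 < d → d < d' →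
    (∀ e : ℕ, e ∣ m → ¬(d < e ∧ e < d')) →
    ∃ e : ℕ, e ∣ n ∧ d < e ∧ e < d')

/-- A positive integer `n` is separable if some `m` interlocks with it. -/
def Separable (n : ℕ) : Prop := ∃ m : ℕ, Interlocking m n

theorem sq_dvd_of_prime_of_isSquare {M : Type*} [CommMonoidWithZero M] {p a : M} (hp : Prime p)
    (ha : IsSquare a) (hpa : p ∣ a) : p ^ 2 ∣ a := by
  obtain ⟨b, rfl⟩ := ha.exists_sq
  exact pow_dvd_pow_of_dvd (hp.dvd_of_dvd_pow hpa) 2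

theorem even_card_divisors_of_not_isSquare {n : ℕ} (hn : ¬ IsSquare n) :
    Even n.divisors.card := by
  have hn0 : n ≠ 0 := by
    rintro rfl
    exact hn IsSquare.zero
  -- Modulo two, the terms of `∑ 1` cancel in pairs under the involution `d ↦ n / d`.
  have sum_eq_zero : ∑ _d ∈ n.divisors, (1 : ZMod 2) = 0 := by
    refine Finset.sum_involution (fun d _ ↦ n / d) (fun _ _ ↦ by decide) ?_ ?_ ?_
    · intro d hd _ hfixed
      exact hn ⟨d, (Nat.div_eq_iff_eq_mul_left (Nat.pos_of_mem_divisors hd)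
        (Nat.dvd_of_mem_divisors hd)).1 hfixed⟩
    · intro d hd
      exact Nat.mem_divisors.2 ⟨Nat.div_dvd_of_dvd (Nat.dvd_of_mem_divisors hd), hn0⟩
    · intro d hd
      exact Nat.div_div_self (Nat.dvd_of_mem_divisors hd) hn0
  simpa [ZMod.natCast_eq_zero_iff_even] using sum_eq_zero

namespace Interlocking

variable {m n k : ℕ}

theorem symm (h : Interlocking m n) : Interlocking n m :=
  ⟨h.2.1, h.1, h.2.2.2, h.2.2.1⟩

theorem exists_dvd_between (h : Interlocking m n) {d d' : ℕ} (hd : d ∣ m) (hd' : d' ∣ m)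
    (one_lt : 1 < d) (hlt : d < d') : ∃ e, e ∣ n ∧ d < e ∧ e < d' := by
  classical
  have hex : ∃ c, c ∣ m ∧ d < c := ⟨d', hd', hlt⟩
  obtain ⟨hc, hdc⟩ := Nat.find_spec hex
  obtain ⟨e, he, hde, hec⟩ := h.2.2.2 d (Nat.find hex) hd hc one_lt hdc
    fun b hb hbetween ↦ Nat.find_min hex hbetween.2 ⟨hb, hbetween.1⟩
  exact ⟨e, he, hde, hec.trans_le (Nat.find_min' hex ⟨hd', hlt⟩)⟩

theorem exists_dvd_between_pow {a i : ℕ} (h : Interlocking m (a ^ k)) (ha : 1 < a) (hi : i ≠ 0)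
    (hik : i < k) : ∃ e, e ∣ m ∧ a ^ i < e ∧ e < a ^ (i + 1) :=
  h.symm.exists_dvd_between (pow_dvd_pow a hik.le) (pow_dvd_pow a hik) (Nat.one_lt_pow hi ha)
    (Nat.pow_lt_pow_succ ha)

theorem strictMonoOn_log {p : ℕ} (h : Interlocking m (p ^ k)) (hp : p.Prime) :
    StrictMonoOn (Nat.log p) {d | d ∣ m ∧ 1 < d} := by
  rintro d ⟨hd, one_lt⟩ d' ⟨hd', -⟩ hlt
  obtain ⟨e, he, hde, hed'⟩ := h.exists_dvd_between hd hd' one_lt hlt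
  obtain ⟨j, -, rfl⟩ := (Nat.dvd_prime_pow hp).1 he
  calc
    Nat.log p d < j := Nat.log_lt_of_lt_pow (Nat.ne_zero_of_lt one_lt) hde
    _ ≤ Nat.log p d' := Nat.le_log_of_pow_le hp.one_lt hed'.le

theorem three_dvd (h : Interlocking m (2 ^ k)) (hk : 2 ≤ k) : 3 ∣ m := by
  obtain ⟨e, he, hlt, hgt⟩ := h.exists_dvd_between_pow one_lt_two one_ne_zero hk
  obtain rfl : e = 3 := by lia
  exact he

theorem not_two_dvd (h : Interlocking m (2 ^ k)) (hk : 2 ≤ k) : ¬ 2 ∣ m := by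
  intro h2
  have h3 : 3 ∣ m := h.three_dvd hk
  have : Nat.log 2 2 < Nat.log 2 3 :=
    h.strictMonoOn_log Nat.prime_two ⟨h2, by norm_num⟩ ⟨h3, by norm_num⟩ (by norm_num)
  norm_num at this

theorem five_dvd_or_seven_dvd (h : Interlocking m (2 ^ k)) (hk : 3 ≤ k) : 5 ∣ m ∨ 7 ∣ m := by
  obtain ⟨e, he, hlt, hgt⟩ := h.exists_dvd_between_pow one_lt_two two_ne_zero hk
  have he6 : e ≠ 6 := by
    rintro rfl
    exact h.not_two_dvd (by lia) (dvd_trans (by norm_num) he)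
  obtain rfl | rfl : e = 5 ∨ e = 7 := by lia
  · exact .inl he
  · exact .inr he

theorem not_isSquare (h : Interlocking m (2 ^ k)) (hk : 3 ≤ k) : ¬ IsSquare m := by
  intro hm
  have log_injOn := (h.strictMonoOn_log Nat.prime_two).injOn
  have h3 : 3 ∣ m := h.three_dvd (by lia)
  have h9 : 9 ∣ m := sq_dvd_of_prime_of_isSquare Nat.prime_three.prime hm h3
  rcases h.five_dvd_or_seven_dvd hk with h5 | h7
  · have h15 : 15 ∣ m := Nat.Coprime.mul_dvd_of_dvd_of_dvd (m := 3) (by norm_num) h3 h5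
    have : 9 = 15 := log_injOn ⟨h9, by norm_num⟩ ⟨h15, by norm_num⟩ (by norm_num)
    contradiction
  · have h49 : 49 ∣ m := sq_dvd_of_prime_of_isSquare Nat.prime_seven.prime hm h7
    have h63 : 63 ∣ m := Nat.Coprime.mul_dvd_of_dvd_of_dvd (m := 9) (by norm_num) h9 h7
    have : 49 = 63 := log_injOn ⟨h49, by norm_num⟩ ⟨h63, by norm_num⟩ (by norm_num)
    contradiction

end Interlocking

theorem interlocking_two_pow_not_square_general (k : ℕ) (hk : 3 ≤ k) (m : ℕ)
    (h : Interlocking m (2 ^ k)) :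
    ¬ IsSquare m ∧ Even m.divisors.card :=
  have hm : ¬ IsSquare m := h.not_isSquare hk
  ⟨hm, even_card_divisors_of_not_isSquare hm⟩

/-- For `k ≥ 6`, no perfect square `m` interlocks with `2^k`; equivalently, if
`(m, 2^k)` is an interlocking pair then `τ(m)` is even. -/
theorem interlocking_two_pow_not_square (k : ℕ) (hk : 6 ≤ k) (m : ℕ)
    (h : Interlocking m (2 ^ k)) :
    ¬ IsSquare m ∧ Even m.divisors.card :=
  interlocking_two_pow_not_square_general k (by lia) m h
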